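/- Let Ω = Ω₁ × ⋯ × Ω_d, where each Ω_i ⊆ ℝ is Lebesgue-measurable of finite Lebesgue measure with (0,1] ⊆ Ω_i, equipped with Lebesgue measure, and let p⃗ = (p₁,…,p_d) with 0 < p_i ≤ ∞ and 0 < min{p₁,…,p_d} < ∞. Then the additional growth-envelope index of L_{p⃗}(Ω) (taken with respect to the envelope t^{-1/min{p₁,…,p_d}}) equals min{p₁,…,p_d}: the Hardy-type inequality ( ∫_0^ε ( t^{1/min{p₁,…,p_d}} f^*(t) )^v dt/t )^{1/v} ≤ c ‖f‖_{p⃗} (for some ε, c > 0 and all f ∈ L_{p⃗}(Ω)) holds for v = min{p₁,…,p_d} and fails for every 0 < v < min{p₁,…,p_d}. -/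

import Mathlib

open MeasureTheory ENNReal Set Filter

noncomputable section

/-- One-variable `L_p` quasi-norm of an `ℝ≥0∞`-valued function (essential sup if `p = ∞`). -/
def lpNorm1 {α : Type} [MeasurableSpace α] (p : ℝ≥0∞) (μ : Measure α)
    (g : α → ℝ≥0∞) : ℝ≥0∞ :=
  if p = ∞ then essSup g μ else (∫⁻ x, g x ^ p.toReal ∂μ) ^ (1 / p.toReal)

/-- Mixed Lebesgue quasi-norm of an `ℝ≥0∞`-valued function on a product space:
the first coordinate is integrated innermost. -/
def mixedNormE : {d : ℕ} → {α : Fin d → Type} →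
    [inst : ∀ i, MeasurableSpace (α i)] → (μ : ∀ i, Measure (α i)) →
    (p : Fin d → ℝ≥0∞) → ((∀ i, α i) → ℝ≥0∞) → ℝ≥0∞
  | 0, _, _, _, _, f => f finZeroElim
  | (d + 1), α, inst, μ, p, f =>
      @mixedNormE d (fun i => α i.succ) (fun i => inst i.succ)
        (fun i => μ i.succ) (fun i => p i.succ)
        (fun y => lpNorm1 (p 0) (μ 0) fun x => f (Fin.cons x y))

/-- Mixed Lebesgue quasi-norm `‖f‖_{p⃗}` of a real-valued function. -/
def mixedNorm {d : ℕ} {α : Fin d → Type} [∀ i, MeasurableSpace (α i)]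
    (μ : ∀ i, Measure (α i)) (p : Fin d → ℝ≥0∞) (f : (∀ i, α i) → ℝ) : ℝ≥0∞ :=
  mixedNormE μ p fun x => ENNReal.ofReal |f x|

/-- Mixed Lorentz quasi-norm `‖f‖_{L_{p⃗,q}}`. -/
def mixedLorentzNorm {d : ℕ} {α : Fin d → Type} [∀ i, MeasurableSpace (α i)]
    (μ : ∀ i, Measure (α i)) (p : Fin d → ℝ≥0∞) (q : ℝ≥0∞) (f : (∀ i, α i) → ℝ) : ℝ≥0∞ :=
  if q = ∞ then
    ⨆ (u : ℝ) (_ : 0 < u),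
      ENNReal.ofReal u * mixedNorm μ p ({x | u < |f x|}.indicator fun _ => (1 : ℝ))
  else
    (∫⁻ u in Set.Ioi (0 : ℝ),
        (ENNReal.ofReal u * mixedNorm μ p ({x | u < |f x|}.indicator fun _ => (1 : ℝ))) ^ q.toReal
          / ENNReal.ofReal u) ^ (1 / q.toReal)

/-- Non-increasing rearrangement `f^*(t)` (with `inf ∅ = ∞`). -/
def rearr {α : Type} [MeasurableSpace α] (μ : Measure α) (f : α → ℝ) (t : ℝ) : ℝ≥0∞ :=
  sInf {s : ℝ≥0∞ | μ {x | s < ENNReal.ofReal |f x|} ≤ ENNReal.ofReal t}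

/-- Growth envelope function of the quasi-normed function space given by the quasi-norm `N`. -/
def growthEnv {α : Type} [MeasurableSpace α] (μ : Measure α)
    (N : (α → ℝ) → ℝ≥0∞) (t : ℝ) : ℝ≥0∞ :=
  ⨆ (f : α → ℝ) (_ : Measurable f) (_ : N f ≤ 1), rearr μ f t

/-- The Hardy-type functional `( ∫_0^ε ( t^{pinv} f^*(t) )^v dt/t )^{1/v}`,
with the usual `sup` modification for `v = ∞`. -/
def hardy {α : Type} [MeasurableSpace α] (μ : Measure α)
    (pinv : ℝ) (v : ℝ≥0∞) (ε : ℝ) (f : α → ℝ) : ℝ≥0∞ :=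
  if v = ∞ then ⨆ (t : ℝ) (_ : t ∈ Set.Ioo 0 ε), ENNReal.ofReal t ^ pinv * rearr μ f t
  else
    (∫⁻ t in Set.Ioo (0 : ℝ) ε,
        (ENNReal.ofReal t ^ pinv * rearr μ f t) ^ v.toReal / ENNReal.ofReal t) ^ (1 / v.toReal)

/-- The modular `ϱ_{p(·)}(f) = ∫ |f(x)|^{p(x)} dμ(x)`. -/
def varModular {α : Type} [MeasurableSpace α] (μ : Measure α)
    (p : α → ℝ) (f : α → ℝ) : ℝ≥0∞ :=
  ∫⁻ x, ENNReal.ofReal (|f x| ^ p x) ∂μ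

/-- The variable Lebesgue quasi-norm `‖f‖_{p(·)}`. -/
def varNorm {α : Type} [MeasurableSpace α] (μ : Measure α)
    (p : α → ℝ) (f : α → ℝ) : ℝ≥0∞ :=
  ⨅ (l : ℝ) (_ : 0 < l) (_ : varModular μ p (fun x => f x / l) ≤ 1), ENNReal.ofReal l

/-- The variable Lorentz quasi-norm `‖f‖_{L_{p(·),q}}`. -/
def varLorentzNorm {α : Type} [MeasurableSpace α] (μ : Measure α)
    (p : α → ℝ) (q : ℝ≥0∞) (f : α → ℝ) : ℝ≥0∞ :=
  if q = ∞ then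
    ⨆ (u : ℝ) (_ : 0 < u),
      ENNReal.ofReal u * varNorm μ p ({x | u < |f x|}.indicator fun _ => (1 : ℝ))
  else
    (∫⁻ u in Set.Ioi (0 : ℝ),
        (ENNReal.ofReal u * varNorm μ p ({x | u < |f x|}.indicator fun _ => (1 : ℝ))) ^ q.toReal
          / ENNReal.ofReal u) ^ (1 / q.toReal)

/-- Local log-Hölder continuity at a point `x₀`. -/
def LocLogHolderAt {E : Type} [PseudoMetricSpace E] (p : E → ℝ) (x₀ : E) : Prop :=
  ∃ C₀ > (0 : ℝ), ∀ x, dist x x₀ < 1 / 2 → |p x - p x₀| ≤ C₀ / (-Real.log (dist x x₀))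

/-- Local log-Hölder continuity (at every point, with a uniform constant). -/
def LocLogHolder {E : Type} [PseudoMetricSpace E] (p : E → ℝ) : Prop :=
  ∃ C₀ > (0 : ℝ), ∀ x y, dist x y < 1 / 2 → |p x - p y| ≤ C₀ / (-Real.log (dist x y))

end

/-!
Upper bound: on a finite measure space, Hölder's inequality in each variable and Tonelli's theorem
bound the norm of `L_m`, `m = min p`, by a constant times the mixed norm, and the Hardy functional
with `v = m` is `(∫_0^ε f*(t)^m dt)^{1/m} ≤ ‖f‖_m` by the layer cake formula.

Sharpness: if the minimum is attained in the variable `x_i`, take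
`f(x) = x_i^{-1/m} (C - log x_i)^{-1/v}` near `x_i = 0`. Its mixed norm is finite because
`∫_0 (C - log t)^{-m/v} dt/t` converges for `v < m`, whereas `f*(t)` is of the order of
`t^{-1/m} (C - log t)^{-1/v}`, so that the Hardy integral dominates the divergent
`∫_0 (C - log t)^{-1} dt/t`.
-/

open scoped NNReal

section LpNorm1

variable {α : Type} [MeasurableSpace α] {p q : ℝ≥0∞} {μ : Measure α}

lemma lpNorm1_eq_eLpNorm (hp : p ≠ 0) (g : α → ℝ≥0∞) : lpNorm1 p μ g = eLpNorm g p μ := by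
  unfold lpNorm1
  split_ifs with hp'
  · rw [hp', eLpNorm_exponent_top, eLpNormEssSup_eq_essSup_enorm]
    rfl
  · exact (eLpNorm_eq_lintegral_rpow_enorm_toReal hp hp' (f := g)).symm

lemma lpNorm1_mono {g h : α → ℝ≥0∞} (hgh : ∀ x, g x ≤ h x) : lpNorm1 p μ g ≤ lpNorm1 p μ h := by
  unfold lpNorm1
  split_ifs
  · exact essSup_mono_ae (Eventually.of_forall hgh)
  · gcongr with x
    exact hgh x

lemma lpNorm1_const_mul (hp : p ≠ 0) {k : ℝ≥0∞} (hk : k ≠ ∞) (g : α → ℝ≥0∞) :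
    lpNorm1 p μ (fun x => k * g x) = k * lpNorm1 p μ g := by
  unfold lpNorm1
  split_ifs with hp'
  · exact ENNReal.essSup_const_mul
  · have hr : 0 < p.toReal := ENNReal.toReal_pos hp hp'
    simp only [ENNReal.mul_rpow_of_nonneg _ _ hr.le]
    rw [lintegral_const_mul' _ _ (ENNReal.rpow_ne_top_of_nonneg hr.le hk),
      ENNReal.mul_rpow_of_nonneg _ _ (by positivity), one_div, ENNReal.rpow_rpow_inv hr.ne']

lemma lpNorm1_one_ne_top [IsFiniteMeasure μ] (hp : p ≠ 0) : lpNorm1 p μ (fun _ => 1) ≠ ∞ := by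
  rw [lpNorm1_eq_eLpNorm hp]
  exact (memLp_const_enorm (c := (1 : ℝ≥0∞)) (by simp)).eLpNorm_ne_top

lemma lpNorm1_le_mul_of_exponent_le (hp : p ≠ 0) (hpq : p ≤ q) {g : α → ℝ≥0∞}
    (hg : Measurable g) :
    lpNorm1 p μ g ≤ μ univ ^ (1 / p.toReal - 1 / q.toReal) * lpNorm1 q μ g := by
  have hq : q ≠ 0 := (pos_iff_ne_zero.2 hp |>.trans_le hpq).ne'
  rw [lpNorm1_eq_eLpNorm hp, lpNorm1_eq_eLpNorm hq, mul_comm]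
  exact eLpNorm_le_eLpNorm_mul_rpow_measure_univ hpq hg.aestronglyMeasurable

lemma one_div_toReal_sub_nonneg (hp : p ≠ 0) (hpq : p ≤ q) :
    0 ≤ 1 / p.toReal - 1 / q.toReal := by
  rcases eq_or_ne q ∞ with rfl | hq
  · simp
  · have hp' : p ≠ ∞ := ne_top_of_le_ne_top hq hpq
    exact sub_nonneg.2 (one_div_le_one_div_of_le (ENNReal.toReal_pos hp hp')
      (ENNReal.toReal_mono hq hpq))

lemma measurable_lpNorm1 {β : Type} [MeasurableSpace β] [SFinite μ] (hp : p ≠ ∞)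
    {f : α × β → ℝ≥0∞} (hf : Measurable f) :
    Measurable fun y => lpNorm1 p μ fun x => f (x, y) := by
  simp only [lpNorm1, if_neg hp]
  exact (hf.pow_const _).lintegral_prod_left'.pow_const _

end LpNorm1

section Cons

variable {d : ℕ} {α : Fin (d + 1) → Type} [∀ i, MeasurableSpace (α i)]

lemma measurable_finCons :
    Measurable fun z : α 0 × (∀ i : Fin d, α i.succ) => (Fin.cons z.1 z.2 : ∀ i, α i) := by
  refine measurable_pi_iff.2 fun i => ?_
  cases i using Fin.cases with
  | zero => exact measurable_fst
  | succ j => exact (measurable_pi_apply j).comp measurable_snd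

lemma lintegral_pi_finCons (μ : ∀ i, Measure (α i)) [∀ i, SigmaFinite (μ i)]
    {f : (∀ i, α i) → ℝ≥0∞} (hf : Measurable f) :
    ∫⁻ x, f x ∂Measure.pi μ =
      ∫⁻ y, ∫⁻ x, f (Fin.cons x y) ∂μ 0 ∂Measure.pi fun i : Fin d => μ i.succ := by
  have he (z : α 0 × ∀ i : Fin d, α i.succ) :
      (MeasurableEquiv.piFinSuccAbove α 0).symm z = Fin.cons z.1 z.2 := Fin.insertNth_zero _ _
  rw [← (measurePreserving_piFinSuccAbove μ 0).symm.lintegral_comp hf]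
  refine (lintegral_congr fun z => congrArg f (he z)).trans ?_
  exact lintegral_prod_symm _ (hf.comp measurable_finCons).aemeasurable

end Cons

section MixedNorm

lemma mixedNormE_mono {d : ℕ} {α : Fin d → Type} [∀ i, MeasurableSpace (α i)]
    (μ : ∀ i, Measure (α i)) (p : Fin d → ℝ≥0∞) {g h : (∀ i, α i) → ℝ≥0∞}
    (hgh : ∀ x, g x ≤ h x) : mixedNormE μ p g ≤ mixedNormE μ p h := by
  induction d with
  | zero => exact hgh _
  | succ d ih => exact ih _ _ fun y => lpNorm1_mono fun x => hgh _

lemma mixedNormE_const_mul {d : ℕ} {α : Fin d → Type} [∀ i, MeasurableSpace (α i)]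
    (μ : ∀ i, Measure (α i)) {p : Fin d → ℝ≥0∞} (hp : ∀ i, p i ≠ 0) {k : ℝ≥0∞} (hk : k ≠ ∞)
    (g : (∀ i, α i) → ℝ≥0∞) :
    mixedNormE μ p (fun x => k * g x) = k * mixedNormE μ p g := by
  induction d with
  | zero => rfl
  | succ d ih =>
    simp only [mixedNormE, lpNorm1_const_mul (hp 0) hk]
    exact ih _ (fun i => hp _) _

lemma mixedNormE_prod {d : ℕ} {α : Fin d → Type} [∀ i, MeasurableSpace (α i)]
    {μ : ∀ i, Measure (α i)} {p : Fin d → ℝ≥0∞} (hp : ∀ i, p i ≠ 0) {g : ∀ i, α i → ℝ≥0}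
    (hg : ∀ i, lpNorm1 (p i) (μ i) (fun x => g i x) ≠ ∞) :
    mixedNormE μ p (fun x => ∏ i, (g i (x i) : ℝ≥0∞)) =
      ∏ i, lpNorm1 (p i) (μ i) (fun x => g i x) := by
  induction d with
  | zero => simp [mixedNormE]
  | succ d ih =>
    have hfibre (y : ∀ i : Fin d, α i.succ) :
        lpNorm1 (p 0) (μ 0) (fun x => ∏ i, (g i ((Fin.cons x y : ∀ i, α i) i) : ℝ≥0∞)) =
          lpNorm1 (p 0) (μ 0) (fun x => g 0 x) * ∏ i : Fin d, (g i.succ (y i) : ℝ≥0∞) := by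
      simp only [Fin.prod_univ_succ, Fin.cons_zero, Fin.cons_succ]
      rw [mul_comm, ← lpNorm1_const_mul (hp 0) (prod_ne_top fun i _ => coe_ne_top)]
      simp only [mul_comm]
    simp only [mixedNormE, hfibre]
    rw [mixedNormE_const_mul _ (fun i => hp _) (hg 0), ih (fun i => hp _) fun i => hg _,
      Fin.prod_univ_succ]

lemma mixedNorm_comp_eval_ne_top {d : ℕ} {α : Fin d → Type} [∀ i, MeasurableSpace (α i)]
    {μ : ∀ i, Measure (α i)} [∀ i, IsFiniteMeasure (μ i)] {p : Fin d → ℝ≥0∞}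
    (hp : ∀ i, p i ≠ 0) (i₀ : Fin d) {h : α i₀ → ℝ}
    (hh : lpNorm1 (p i₀) (μ i₀) (fun x => ENNReal.ofReal |h x|) ≠ ∞) :
    mixedNorm μ p (fun x => h (x i₀)) ≠ ∞ := by
  let g : ∀ i, α i → ℝ≥0 := Pi.mulSingle i₀ fun x => |h x|.toNNReal
  have hg (i : Fin d) : lpNorm1 (p i) (μ i) (fun x => g i x) ≠ ∞ := by
    rcases eq_or_ne i i₀ with rfl | hi
    · simpa only [g, Pi.mulSingle_eq_same, ENNReal.ofReal] using hh
    · simpa only [g, Pi.mulSingle_eq_of_ne hi, Pi.one_apply, coe_one] using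
        lpNorm1_one_ne_top (hp i)
  have hprod (x : ∀ i, α i) : ENNReal.ofReal |h (x i₀)| = ∏ i, (g i (x i) : ℝ≥0∞) := by
    rw [Finset.prod_eq_single i₀ (fun i _ hi => by simp [g, Pi.mulSingle_eq_of_ne hi]) (by simp)]
    simp only [g, Pi.mulSingle_eq_same, ENNReal.ofReal]
  simp only [mixedNorm, hprod, mixedNormE_prod hp hg]
  exact prod_ne_top fun i _ => hg i

lemma lpNorm1_pi_eq_mixedNormE {d : ℕ} {α : Fin d → Type} [∀ i, MeasurableSpace (α i)]
    (μ : ∀ i, Measure (α i)) [∀ i, SigmaFinite (μ i)] {m : ℝ≥0∞} (hm₀ : m ≠ 0) (hm : m ≠ ∞)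
    {f : (∀ i, α i) → ℝ≥0∞} (hf : Measurable f) :
    lpNorm1 m (Measure.pi μ) f = mixedNormE μ (fun _ => m) f := by
  have hr : m.toReal ≠ 0 := (ENNReal.toReal_pos hm₀ hm).ne'
  induction d with
  | zero =>
    simp only [lpNorm1, if_neg hm, Measure.pi_of_empty μ finZeroElim, lintegral_dirac, one_div,
      ENNReal.rpow_rpow_inv hr]
    rfl
  | succ d ih =>
    have hfc : Measurable fun y : ∀ i : Fin d, α i.succ =>
        lpNorm1 m (μ 0) fun x => f (Fin.cons x y) :=
      measurable_lpNorm1 (f := fun z => f (Fin.cons z.1 z.2)) hm (hf.comp measurable_finCons)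
    rw [mixedNormE, ← ih _ hfc]
    simp only [lpNorm1, if_neg hm, one_div, ENNReal.rpow_inv_rpow hr]
    exact congrArg (· ^ m.toReal⁻¹) (lintegral_pi_finCons μ (hf.pow_const _))

lemma mixedNormE_le_mul_of_exponent_le {d : ℕ} {α : Fin d → Type} [∀ i, MeasurableSpace (α i)]
    (μ : ∀ i, Measure (α i)) [∀ i, IsFiniteMeasure (μ i)] {m p : Fin d → ℝ≥0∞}
    (hm₀ : ∀ i, m i ≠ 0) (hm : ∀ i, m i ≠ ∞) (hmp : ∀ i, m i ≤ p i)
    {f : (∀ i, α i) → ℝ≥0∞} (hf : Measurable f) :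
    mixedNormE μ m f ≤
      (∏ i, μ i univ ^ (1 / (m i).toReal - 1 / (p i).toReal)) * mixedNormE μ p f := by
  induction d with
  | zero => simp [mixedNormE]
  | succ d ih =>
    have hp (i) : p i ≠ 0 := (pos_iff_ne_zero.2 (hm₀ i) |>.trans_le (hmp i)).ne'
    have hfc := hf.comp measurable_finCons
    set k := μ 0 univ ^ (1 / (m 0).toReal - 1 / (p 0).toReal)
    have hk : k ≠ ∞ := ENNReal.rpow_ne_top_of_nonneg
      (one_div_toReal_sub_nonneg (hm₀ 0) (hmp 0)) (measure_ne_top _ _)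
    have hfibre (y : ∀ i : Fin d, α i.succ) :
        lpNorm1 (m 0) (μ 0) (fun x => f (Fin.cons x y)) ≤
          k * lpNorm1 (p 0) (μ 0) (fun x => f (Fin.cons x y)) :=
      lpNorm1_le_mul_of_exponent_le (hm₀ 0) (hmp 0) (hfc.comp measurable_prodMk_right)
    rw [mixedNormE, mixedNormE, Fin.prod_univ_succ, mul_comm k, mul_assoc]
    refine (ih _ (fun i => hm₀ _) (fun i => hm _) (fun i => hmp _)
      (measurable_lpNorm1 (hm 0) hfc)).trans ?_
    rw [← mixedNormE_const_mul _ (fun i => hp _) hk]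
    gcongr
    exact mixedNormE_mono _ _ hfibre

end MixedNorm

section Rearrangement

variable {α : Type} [MeasurableSpace α] {μ : Measure α} {f : α → ℝ}

lemma rearr_antitone : Antitone (rearr μ f) := fun _ _ hst =>
  sInf_le_sInf fun _ hs => le_trans hs (ENNReal.ofReal_le_ofReal hst)

lemma rearr_le_of_measure_le {s : ℝ≥0∞} {t : ℝ}
    (h : μ {x | s < ENNReal.ofReal |f x|} ≤ ENNReal.ofReal t) : rearr μ f t ≤ s :=
  sInf_le h

lemma le_rearr_of_lt_measure {s : ℝ≥0∞} {t : ℝ}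
    (h : ENNReal.ofReal t < μ {x | s ≤ ENNReal.ofReal |f x|}) : s ≤ rearr μ f t := by
  refine le_sInf fun s' hs' => ?_
  by_contra! hlt
  exact (h.trans_le (measure_mono fun _ hx => hlt.trans_le hx)).not_ge hs'

lemma volume_restrict_Ioi_ofReal_lt (c : ℝ≥0∞) :
    volume.restrict (Ioi (0 : ℝ)) {s | ENNReal.ofReal s < c} = c := by
  rw [Measure.restrict_apply (measurableSet_lt (by fun_prop) measurable_const)]
  rcases eq_or_ne c ∞ with rfl | hc
  · simp
  · have hIoo : {s | ENNReal.ofReal s < c} ∩ Ioi 0 = Ioo 0 c.toReal := by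
      ext s
      exact and_comm.trans (and_congr_right fun hs =>
        ENNReal.ofReal_lt_iff_lt_toReal (le_of_lt hs) hc)
    rw [hIoo, Real.volume_Ioo, sub_zero, ENNReal.ofReal_toReal hc]

lemma lintegral_eq_lintegral_meas_ofReal_lt [SFinite μ] {g : α → ℝ≥0∞} (hg : Measurable g) :
    ∫⁻ x, g x ∂μ = ∫⁻ s in Ioi (0 : ℝ), μ {x | ENNReal.ofReal s < g x} := by
  have hS : MeasurableSet {z : α × ℝ | ENNReal.ofReal z.2 < g z.1} :=
    measurableSet_lt (by fun_prop) (by fun_prop)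
  calc ∫⁻ x, g x ∂μ
      = ∫⁻ x, volume.restrict (Ioi 0) {s | ENNReal.ofReal s < g x} ∂μ := by
        simp only [volume_restrict_Ioi_ofReal_lt]
    _ = ∫⁻ s in Ioi 0, μ {x | ENNReal.ofReal s < g x} :=
        (Measure.prod_apply hS).symm.trans (Measure.prod_apply_symm hS)

lemma volume_lt_rearr_le (s : ℝ≥0∞) :
    volume.restrict (Ioi 0) {t | s < rearr μ f t} ≤ μ {x | s < ENNReal.ofReal |f x|} := by
  refine (measure_mono fun t ht => ?_).trans (volume_restrict_Ioi_ofReal_lt _).le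
  exact lt_of_not_ge fun h => (rearr_le_of_measure_le h).not_gt ht

lemma lintegral_rearr_rpow_le [SFinite μ] (hf : Measurable f) {m : ℝ} (hm : 0 < m) :
    ∫⁻ t in Ioi 0, rearr μ f t ^ m ≤ ∫⁻ x, ENNReal.ofReal |f x| ^ m ∂μ := by
  rw [lintegral_eq_lintegral_meas_ofReal_lt (rearr_antitone.measurable.pow_const m),
    lintegral_eq_lintegral_meas_ofReal_lt (μ := μ) (hf.abs.ennreal_ofReal.pow_const m)]
  simp only [← ENNReal.rpow_inv_lt_iff hm]
  exact lintegral_mono fun s => volume_lt_rearr_le _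

lemma hardy_le_lpNorm1 [SFinite μ] (hf : Measurable f) {m : ℝ≥0∞} (hm₀ : m ≠ 0) (hm : m ≠ ∞)
    (ε : ℝ) : hardy μ (1 / m.toReal) m ε f ≤ lpNorm1 m μ fun x => ENNReal.ofReal |f x| := by
  have hr : 0 < m.toReal := ENNReal.toReal_pos hm₀ hm
  rw [hardy, lpNorm1, if_neg hm, if_neg hm]
  gcongr
  calc ∫⁻ t in Ioo 0 ε,
        (ENNReal.ofReal t ^ (1 / m.toReal) * rearr μ f t) ^ m.toReal / ENNReal.ofReal t
      = ∫⁻ t in Ioo 0 ε, rearr μ f t ^ m.toReal := by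
        refine setLIntegral_congr_fun measurableSet_Ioo fun t ht => ?_
        have ht₀ : ENNReal.ofReal t ≠ 0 := (ENNReal.ofReal_pos.2 ht.1).ne'
        simp only [ENNReal.mul_rpow_of_nonneg _ _ hr.le, one_div, ENNReal.rpow_inv_rpow hr.ne']
        rw [mul_comm, ENNReal.mul_div_cancel_right ht₀ ENNReal.ofReal_ne_top]
    _ ≤ ∫⁻ t in Ioi 0, rearr μ f t ^ m.toReal := lintegral_mono_set Ioo_subset_Ioi_self
    _ ≤ ∫⁻ x, ENNReal.ofReal |f x| ^ m.toReal ∂μ := lintegral_rearr_rpow_le hf hr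

end Rearrangement

lemma hardy_le_mul_mixedNorm {d : ℕ} {α : Fin d → Type} [∀ i, MeasurableSpace (α i)]
    (μ : ∀ i, Measure (α i)) [∀ i, IsFiniteMeasure (μ i)] {m : ℝ≥0∞} {p : Fin d → ℝ≥0∞}
    (hm₀ : m ≠ 0) (hm : m ≠ ∞) (hmp : ∀ i, m ≤ p i) (ε : ℝ) {f : (∀ i, α i) → ℝ}
    (hf : Measurable f) :
    hardy (Measure.pi μ) (1 / m.toReal) m ε f ≤
      (∏ i, μ i univ ^ (1 / m.toReal - 1 / (p i).toReal)) * mixedNorm μ p f := by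
  have hf' : Measurable fun x => ENNReal.ofReal |f x| := by fun_prop
  calc hardy (Measure.pi μ) (1 / m.toReal) m ε f
      ≤ lpNorm1 m (Measure.pi μ) fun x => ENNReal.ofReal |f x| := hardy_le_lpNorm1 hf hm₀ hm ε
    _ = mixedNormE μ (fun _ => m) fun x => ENNReal.ofReal |f x| :=
        lpNorm1_pi_eq_mixedNormE μ hm₀ hm hf'
    _ ≤ _ := mixedNormE_le_mul_of_exponent_le μ (fun _ => hm₀) (fun _ => hm) hmp hf'

section LogPow

lemma lintegral_Ioo_inv_mul_comp_sub_log (C : ℝ) {a : ℝ} (ha : 0 < a) (g : ℝ → ℝ≥0∞) :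
    ∫⁻ t in Ioo 0 a, ENNReal.ofReal t⁻¹ * g (C - Real.log t) =
      ∫⁻ x in Ioi (C - Real.log a), g x := by
  have himage : (fun t => C - Real.log t) '' Ioo 0 a = Ioi (C - Real.log a) := by
    ext x
    constructor
    · rintro ⟨t, ht, rfl⟩
      exact sub_lt_sub_left (Real.log_lt_log ht.1 ht.2) C
    · intro hx
      refine ⟨Real.exp (C - x), ⟨Real.exp_pos _, ?_⟩, by simp⟩
      exact (Real.lt_log_iff_exp_lt ha).1 (sub_lt_comm.1 hx)
  have hderiv : ∀ t ∈ Ioo 0 a, HasDerivWithinAt (fun t => C - Real.log t) (-t⁻¹) (Ioo 0 a) t :=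
    fun t ht => ((Real.hasDerivAt_log ht.1.ne').const_sub C).hasDerivWithinAt
  have hinj : InjOn (fun t => C - Real.log t) (Ioo 0 a) := fun s hs t ht hst =>
    Real.log_injOn_pos hs.1 ht.1 (sub_right_injective hst)
  rw [← himage, lintegral_image_eq_lintegral_abs_deriv_mul measurableSet_Ioo hderiv hinj]
  refine setLIntegral_congr_fun measurableSet_Ioo fun t ht => ?_
  simp only [abs_neg, abs_of_pos (inv_pos.2 ht.1)]

lemma lintegral_Ioi_rpow_neg_ne_top {b r : ℝ} (hb : 0 < b) (hr : 1 < r) :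
    ∫⁻ x in Ioi b, ENNReal.ofReal (x ^ (-r)) ≠ ∞ :=
  (integrableOn_Ioi_rpow_of_lt (neg_lt_neg hr) hb).lintegral_lt_top.ne

lemma lintegral_Ioi_inv_eq_top {b : ℝ} (hb : 0 ≤ b) :
    ∫⁻ x in Ioi b, ENNReal.ofReal x⁻¹ = ∞ := by
  by_contra h
  refine not_integrableOn_Ioi_inv (a := b) ((lintegral_ofReal_ne_top_iff_integrable
    measurable_inv.aestronglyMeasurable ?_).1 h)
  exact ae_restrict_of_forall_mem measurableSet_Ioi fun x hx => inv_nonneg.2 (hb.trans hx.le)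

/-- The profile `t ↦ t ^ (-q) * (C - log t) ^ (-r)` of the extremal function: the logarithmic
factor separates the exponents on the scale where the power `t ^ (-q)` is critical. -/
noncomputable def logPow (q r C t : ℝ) : ℝ := t ^ (-q) * (C - Real.log t) ^ (-r)

variable {q r C a t : ℝ}

lemma measurable_logPow : Measurable (logPow q r C) := by
  unfold logPow
  fun_prop

lemma sub_log_pos (hC : Real.log a < C) (ht : t ∈ Ioc 0 a) : 0 < C - Real.log t :=
  sub_pos.2 ((Real.log_le_log ht.1 ht.2).trans_lt hC)

lemma logPow_nonneg (hC : Real.log a < C) (ht : t ∈ Ioc 0 a) : 0 ≤ logPow q r C t :=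
  mul_nonneg (Real.rpow_nonneg ht.1.le _) (Real.rpow_nonneg (sub_log_pos hC ht).le _)

lemma mul_log_sub_log_le {x y : ℝ} (hr : 0 ≤ r) (hx : 0 < x) (hxy : x ≤ y) (hrx : r ≤ q * x) :
    r * (Real.log y - Real.log x) ≤ q * (y - x) := by
  have hy : 0 < y := hx.trans_le hxy
  calc r * (Real.log y - Real.log x)
      = r * Real.log (y / x) := by rw [Real.log_div hy.ne' hx.ne']
    _ ≤ r * (y / x - 1) := by
        gcongr
        exact Real.log_le_sub_one_of_pos (div_pos hy hx)
    _ = r * ((y - x) / x) := by rw [sub_div, div_self hx.ne']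
    _ ≤ q * x * ((y - x) / x) :=
        mul_le_mul_of_nonneg_right hrx (div_nonneg (sub_nonneg.2 hxy) hx.le)
    _ = q * (y - x) := by field_simp

lemma antitoneOn_logPow (hr : 0 ≤ r) (hC : Real.log a < C) (hrq : r ≤ q * (C - Real.log a)) :
    AntitoneOn (logPow q r C) (Ioc 0 a) := by
  intro s hs t ht hst
  have hx := sub_log_pos hC ht
  have hy := sub_log_pos hC hs
  have hq : 0 ≤ q := nonneg_of_mul_nonneg_left (hr.trans hrq) (sub_pos.2 hC)
  have hrx : r ≤ q * (C - Real.log t) := hrq.trans <|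
    mul_le_mul_of_nonneg_left (sub_le_sub_left (Real.log_le_log ht.1 ht.2) C) hq
  have hlog := mul_log_sub_log_le hr hx (sub_le_sub_left (Real.log_le_log hs.1 hst) C) hrx
  rw [logPow, logPow, Real.rpow_def_of_pos ht.1, Real.rpow_def_of_pos hs.1,
    Real.rpow_def_of_pos hx, Real.rpow_def_of_pos hy, ← Real.exp_add, ← Real.exp_add]
  refine Real.exp_le_exp.2 ?_
  linarith

lemma logPow_rpow_of_mul_eq_one {m : ℝ} (hqm : q * m = 1) (hC : Real.log a < C)
    (ht : t ∈ Ioc 0 a) : logPow q r C t ^ m = t⁻¹ * (C - Real.log t) ^ (-(r * m)) := by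
  have hL := sub_log_pos hC ht
  rw [logPow, Real.mul_rpow (Real.rpow_nonneg ht.1.le _) (Real.rpow_nonneg hL.le _),
    ← Real.rpow_mul ht.1.le, ← Real.rpow_mul hL.le, neg_mul, neg_mul, hqm, Real.rpow_neg_one]

lemma lintegral_logPow_rpow_ne_top {m : ℝ} (hm : 0 ≤ m) (hqm : q * m = 1) (hrm : 1 < r * m)
    (ha : 0 < a) (hC : Real.log a < C) :
    ∫⁻ t in Ioc 0 a, ENNReal.ofReal (logPow q r C t) ^ m ≠ ∞ := by
  have hpow : ∫⁻ t in Ioo 0 a, ENNReal.ofReal (logPow q r C t) ^ m =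
      ∫⁻ t in Ioo 0 a, ENNReal.ofReal t⁻¹ * ENNReal.ofReal ((C - Real.log t) ^ (-(r * m))) := by
    refine setLIntegral_congr_fun measurableSet_Ioo fun t ht => ?_
    have ht' := Ioo_subset_Ioc_self ht
    simp only [ENNReal.ofReal_rpow_of_nonneg (logPow_nonneg hC ht') hm,
      logPow_rpow_of_mul_eq_one hqm hC ht', ENNReal.ofReal_mul (inv_nonneg.2 ht.1.le)]
  rw [← restrict_Ioo_eq_restrict_Ioc, hpow, lintegral_Ioo_inv_mul_comp_sub_log C ha
    fun x => ENNReal.ofReal (x ^ (-(r * m)))]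
  exact lintegral_Ioi_rpow_neg_ne_top (sub_pos.2 hC) hrm

lemma rpow_mul_logPow_const_mul_rpow {c w : ℝ} (hw : w ≠ 0) (hc : 0 < c) (ht : 0 < t)
    (hL : 0 < C - Real.log (c * t)) :
    (t ^ q * logPow q (1 / w) C (c * t)) ^ w =
      c ^ (-(q * w)) * (C - Real.log c - Real.log t)⁻¹ := by
  have hcancel : t ^ q * logPow q (1 / w) C (c * t) =
      c ^ (-q) * (C - Real.log (c * t)) ^ (-(1 / w)) := by
    rw [logPow, Real.mul_rpow hc.le ht.le, Real.rpow_neg ht.le]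
    field_simp
  rw [hcancel, Real.mul_rpow (by positivity) (by positivity), ← Real.rpow_mul hc.le,
    ← Real.rpow_mul hL.le, neg_mul, neg_mul, one_div_mul_cancel hw, Real.rpow_neg_one,
    Real.log_mul hc.ne' ht.ne', sub_sub]

end LogPow

/-- On `(0, a]` the distribution of the variable `u` under `μ` is `k` times Lebesgue measure,
nothing being required elsewhere. This is how much of a measure space is needed to transplant
a singularity from the half line onto it. -/
structure IsUniformBelow {α : Type} [MeasurableSpace α] (μ : Measure α) (u : α → ℝ) (k : ℝ≥0∞)
    (a : ℝ) : Prop where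
  measurable : Measurable u
  pos : 0 < a
  density_ne_zero : k ≠ 0
  density_ne_top : k ≠ ∞
  restrict_map : (μ.map u).restrict (Ioc 0 a) = k • volume.restrict (Ioc 0 a)

lemma isUniformBelow_restrict {Ω : Set ℝ} (hΩ : Ioc 0 1 ⊆ Ω) :
    IsUniformBelow (volume.restrict Ω) id 1 1 where
  measurable := measurable_id
  pos := one_pos
  density_ne_zero := one_ne_zero
  density_ne_top := one_ne_top
  restrict_map := by
    rw [Measure.map_id, Measure.restrict_restrict measurableSet_Ioc, inter_eq_left.2 hΩ, one_smul]

namespace IsUniformBelow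

section

variable {α : Type} [MeasurableSpace α] {μ : Measure α} {u : α → ℝ} {k : ℝ≥0∞} {a : ℝ}

lemma measure_preimage_Ioc (hu : IsUniformBelow μ u k a) {s : ℝ} (hs : s ≤ a) :
    μ (u ⁻¹' Ioc 0 s) = k * ENNReal.ofReal s := by
  have h := congrArg (· (Ioc 0 s)) hu.restrict_map
  simpa only [Measure.restrict_apply measurableSet_Ioc, Measure.smul_apply, smul_eq_mul,
    inter_eq_left.2 (Ioc_subset_Ioc_right hs), Real.volume_Ioc, sub_zero,
    Measure.map_apply hu.measurable measurableSet_Ioc] using h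

lemma ne_zero (hu : IsUniformBelow μ u k a) : μ ≠ 0 := by
  rintro rfl
  have h := hu.measure_preimage_Ioc le_rfl
  rw [Measure.coe_zero, Pi.zero_apply] at h
  exact mul_ne_zero hu.density_ne_zero (ENNReal.ofReal_pos.2 hu.pos).ne' h.symm

lemma lintegral_indicator_comp (hu : IsUniformBelow μ u k a) {g : ℝ → ℝ≥0∞} (hg : Measurable g) :
    ∫⁻ x, (Ioc 0 a).indicator g (u x) ∂μ = k * ∫⁻ t in Ioc 0 a, g t := by
  rw [← lintegral_map (hg.indicator measurableSet_Ioc) hu.measurable,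
    lintegral_indicator measurableSet_Ioc, hu.restrict_map, lintegral_smul_measure, smul_eq_mul]

lemma lpNorm1_logPow_ne_top (hu : IsUniformBelow μ u k a) {m : ℝ≥0∞} (hm₀ : m ≠ 0) (hm : m ≠ ∞)
    {r C : ℝ} (hrm : 1 < r * m.toReal) (hC : Real.log a < C) :
    lpNorm1 m μ (fun x => ENNReal.ofReal
      |(Ioc 0 a).indicator (logPow (1 / m.toReal) r C) (u x)|) ≠ ∞ := by
  have hm' : 0 < m.toReal := ENNReal.toReal_pos hm₀ hm
  have hpow (t : ℝ) :
      ENNReal.ofReal |(Ioc 0 a).indicator (logPow (1 / m.toReal) r C) t| ^ m.toReal =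
        (Ioc 0 a).indicator
          (fun t => ENNReal.ofReal (logPow (1 / m.toReal) r C t) ^ m.toReal) t := by
    by_cases ht : t ∈ Ioc 0 a
    · simp only [indicator_of_mem ht, abs_of_nonneg (logPow_nonneg hC ht)]
    · simp only [indicator_of_notMem ht, abs_zero, ENNReal.ofReal_zero,
        ENNReal.zero_rpow_of_pos hm']
  simp only [lpNorm1, if_neg hm, hpow]
  rw [hu.lintegral_indicator_comp (measurable_logPow.ennreal_ofReal.pow_const _)]
  exact ENNReal.rpow_ne_top_of_nonneg (by positivity) <| ENNReal.mul_ne_top hu.density_ne_top <|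
    lintegral_logPow_rpow_ne_top hm'.le (one_div_mul_cancel hm'.ne') hrm hu.pos hC

lemma le_rearr (hu : IsUniformBelow μ u k a) {ψ : ℝ → ℝ} (hψ : AntitoneOn ψ (Ioc 0 a)) {c t : ℝ}
    (hc : 0 < c) (hkc : 1 < k * ENNReal.ofReal c) (ht : 0 < t) (hct : c * t ≤ a) :
    ENNReal.ofReal (ψ (c * t)) ≤ rearr μ (fun x => (Ioc 0 a).indicator ψ (u x)) t := by
  refine le_rearr_of_lt_measure ?_
  calc ENNReal.ofReal t
      < k * ENNReal.ofReal c * ENNReal.ofReal t := by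
        simpa only [one_mul] using ENNReal.mul_lt_mul_left
          (ENNReal.ofReal_pos.2 ht).ne' ENNReal.ofReal_ne_top hkc
    _ = μ (u ⁻¹' Ioc 0 (c * t)) := by
        rw [hu.measure_preimage_Ioc hct, ENNReal.ofReal_mul hc.le, mul_assoc]
    _ ≤ _ := by
        refine measure_mono fun x hx => ?_
        have hxa : u x ∈ Ioc 0 a := Ioc_subset_Ioc_right hct hx
        have hle : ψ (c * t) ≤ |ψ (u x)| :=
          (hψ hxa ⟨mul_pos hc ht, hct⟩ hx.2).trans (le_abs_self _)
        simpa only [mem_ofPred_eq, indicator_of_mem hxa] using ENNReal.ofReal_le_ofReal hle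

lemma le_rearr_logPow_rpow_div (hu : IsUniformBelow μ u k a) {q w C c t : ℝ} (hw : 0 < w)
    (hC : Real.log a < C) (hCq : 1 / w ≤ q * (C - Real.log a)) (hc : 0 < c)
    (hkc : 1 < k * ENNReal.ofReal c) (ht : 0 < t) (hct : c * t ≤ a) :
    ENNReal.ofReal (c ^ (-(q * w))) *
        (ENNReal.ofReal t⁻¹ * ENNReal.ofReal (C - Real.log c - Real.log t)⁻¹) ≤
      (ENNReal.ofReal t ^ q *
        rearr μ (fun x => (Ioc 0 a).indicator (logPow q (1 / w) C) (u x)) t) ^ w /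
          ENNReal.ofReal t := by
  have hmem : c * t ∈ Ioc 0 a := ⟨mul_pos hc ht, hct⟩
  have hψ : 0 ≤ logPow q (1 / w) C (c * t) := logPow_nonneg hC hmem
  calc ENNReal.ofReal (c ^ (-(q * w))) *
        (ENNReal.ofReal t⁻¹ * ENNReal.ofReal (C - Real.log c - Real.log t)⁻¹)
      = ENNReal.ofReal (c ^ (-(q * w)) * (C - Real.log c - Real.log t)⁻¹) /
          ENNReal.ofReal t := by
        rw [ENNReal.ofReal_mul (by positivity), ENNReal.ofReal_inv_of_pos ht, div_eq_mul_inv]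
        ring
    _ = (ENNReal.ofReal t ^ q * ENNReal.ofReal (logPow q (1 / w) C (c * t))) ^ w /
          ENNReal.ofReal t := by
        rw [← rpow_mul_logPow_const_mul_rpow hw.ne' hc ht (sub_log_pos hC hmem),
          ENNReal.ofReal_rpow_of_pos ht, ← ENNReal.ofReal_mul (by positivity),
          ENNReal.ofReal_rpow_of_nonneg (by positivity) hw.le]
    _ ≤ _ := by
        gcongr
        exact hu.le_rearr (antitoneOn_logPow (by positivity) hC hCq) hc hkc ht hct

lemma hardy_logPow_eq_top (hu : IsUniformBelow μ u k a) {v : ℝ≥0∞} (hv₀ : v ≠ 0) (hv : v ≠ ∞)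
    {q C : ℝ} (hC : Real.log a < C) (hCq : 1 / v.toReal ≤ q * (C - Real.log a)) {ε : ℝ}
    (hε : 0 < ε) :
    hardy μ q v ε (fun x => (Ioc 0 a).indicator (logPow q (1 / v.toReal) C) (u x)) = ∞ := by
  have hw : 0 < v.toReal := ENNReal.toReal_pos hv₀ hv
  obtain ⟨c, hc, hkc⟩ : ∃ c : ℝ, 0 < c ∧ 1 < k * ENNReal.ofReal c := by
    obtain ⟨n, hn, hkn⟩ := ENNReal.exists_nat_pos_mul_gt hu.density_ne_zero one_ne_top
    exact ⟨n, Nat.cast_pos.2 hn, by rwa [ENNReal.ofReal_natCast, mul_comm]⟩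
  obtain ⟨δ, hδ, hδε, hδa⟩ : ∃ δ > 0, δ ≤ ε ∧ c * δ ≤ a :=
    ⟨min ε (a / c), lt_min hε (div_pos hu.pos hc), min_le_left _ _,
      (le_div_iff₀' hc).1 (min_le_right _ _)⟩
  have hlog : 0 ≤ C - Real.log c - Real.log δ := by
    rw [sub_sub, ← Real.log_mul hc.ne' hδ.ne']
    exact (sub_log_pos hC ⟨mul_pos hc hδ, hδa⟩).le
  rw [hardy, if_neg hv, ENNReal.rpow_eq_top_iff_of_pos (by positivity), eq_top_iff]
  calc ∞ = ENNReal.ofReal (c ^ (-(q * v.toReal))) *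
        ∫⁻ x in Ioi (C - Real.log c - Real.log δ), ENNReal.ofReal x⁻¹ := by
        rw [lintegral_Ioi_inv_eq_top hlog,
          ENNReal.mul_top (ENNReal.ofReal_pos.2 (by positivity)).ne']
    _ = ∫⁻ t in Ioo 0 δ, ENNReal.ofReal (c ^ (-(q * v.toReal))) *
          (ENNReal.ofReal t⁻¹ * ENNReal.ofReal (C - Real.log c - Real.log t)⁻¹) := by
        rw [lintegral_const_mul' _ _ ENNReal.ofReal_ne_top,
          lintegral_Ioo_inv_mul_comp_sub_log _ hδ fun x => ENNReal.ofReal x⁻¹]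
    _ ≤ ∫⁻ t in Ioo 0 δ, (ENNReal.ofReal t ^ q * rearr μ (fun x =>
          (Ioc 0 a).indicator (logPow q (1 / v.toReal) C) (u x)) t) ^ v.toReal /
            ENNReal.ofReal t :=
        setLIntegral_mono' measurableSet_Ioo fun t ht => hu.le_rearr_logPow_rpow_div hw hC hCq hc
          hkc ht.1 ((mul_le_mul_of_nonneg_left ht.2.le hc.le).trans hδa)
    _ ≤ _ := lintegral_mono_set (Ioo_subset_Ioo_right hδε)

end

lemma comp_eval {d : ℕ} {α : Fin d → Type} [∀ i, MeasurableSpace (α i)]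
    {μ : ∀ i, Measure (α i)} [∀ i, IsFiniteMeasure (μ i)] (hμ : ∀ i, μ i ≠ 0) {i₀ : Fin d}
    {u : α i₀ → ℝ} {k : ℝ≥0∞} {a : ℝ} (hu : IsUniformBelow (μ i₀) u k a) :
    IsUniformBelow (Measure.pi μ) (fun x => u (x i₀))
      ((∏ i ∈ Finset.univ.erase i₀, μ i univ) * k) a where
  measurable := hu.measurable.comp (measurable_pi_apply i₀)
  pos := hu.pos
  density_ne_zero := mul_ne_zero
    (Finset.prod_ne_zero_iff.2 fun i _ => by simpa using hμ i) hu.density_ne_zero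
  density_ne_top := ENNReal.mul_ne_top (prod_ne_top fun i _ => measure_ne_top _ _)
    hu.density_ne_top
  restrict_map := by
    have hmap : (Measure.pi μ).map (fun x => u (x i₀)) =
        ((Measure.pi μ).map (Function.eval i₀)).map u :=
      (Measure.map_map hu.measurable (measurable_pi_apply i₀)).symm
    rw [hmap, Measure.pi_map_eval, Measure.map_smul, Measure.restrict_smul, hu.restrict_map,
      smul_smul]

end IsUniformBelow

lemma exists_mixedNorm_ne_top_hardy_eq_top {d : ℕ} {α : Fin d → Type}
    [∀ i, MeasurableSpace (α i)] {μ : ∀ i, Measure (α i)} [∀ i, IsFiniteMeasure (μ i)]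
    (hμ : ∀ i, μ i ≠ 0) {p : Fin d → ℝ≥0∞} (hp : ∀ i, p i ≠ 0) {i₀ : Fin d} (hp₀ : p i₀ ≠ ∞)
    {u : α i₀ → ℝ} {k : ℝ≥0∞} {a : ℝ} (hu : IsUniformBelow (μ i₀) u k a) {v : ℝ≥0∞}
    (hv₀ : v ≠ 0) (hv : v < p i₀) :
    ∃ f : (∀ i, α i) → ℝ, Measurable f ∧ mixedNorm μ p f ≠ ∞ ∧
      ∀ ε > (0 : ℝ), hardy (Measure.pi μ) (1 / (p i₀).toReal) v ε f = ∞ := by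
  have hv_top : v ≠ ∞ := ne_top_of_lt hv
  have hw : 0 < v.toReal := ENNReal.toReal_pos hv₀ hv_top
  have hm : 0 < (p i₀).toReal := ENNReal.toReal_pos (hp i₀) hp₀
  have hvm : 1 < 1 / v.toReal * (p i₀).toReal := by
    rw [one_div_mul_eq_div, one_lt_div hw]
    exact ENNReal.toReal_strict_mono hp₀ hv
  -- This is the least `C` for which the profile is antitone on all of `(0, a]`.
  let C := Real.log a + (p i₀).toReal / v.toReal
  have hC : Real.log a < C := lt_add_of_pos_right _ (div_pos hm hw)
  have hCq : 1 / v.toReal ≤ 1 / (p i₀).toReal * (C - Real.log a) := by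
    refine le_of_eq ?_
    simp only [C, add_sub_cancel_left]
    field_simp
  let h := (Ioc 0 a).indicator (logPow (1 / (p i₀).toReal) (1 / v.toReal) C)
  have hh : Measurable h := measurable_logPow.indicator measurableSet_Ioc
  refine ⟨fun x => h (u (x i₀)), hh.comp (hu.measurable.comp (measurable_pi_apply i₀)), ?_, ?_⟩
  · exact mixedNorm_comp_eval_ne_top hp i₀ (hu.lpNorm1_logPow_ne_top (hp i₀) hp₀ hvm hC)
  · exact fun ε hε => (hu.comp_eval hμ).hardy_logPow_eq_top hv₀ hv_top hC hCq hε

theorem statement4_general {d : ℕ} {α : Fin d → Type} [∀ i, MeasurableSpace (α i)]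
    {μ : ∀ i, Measure (α i)} [∀ i, IsFiniteMeasure (μ i)] (hμ : ∀ i, μ i ≠ 0)
    {p : Fin d → ℝ≥0∞} {i₀ : Fin d} (hi₀ : p i₀ = ⨅ i, p i) {u : α i₀ → ℝ} {k : ℝ≥0∞} {a : ℝ}
    (hu : IsUniformBelow (μ i₀) u k a) (hminpos : 0 < ⨅ i, p i) (hminfin : ⨅ i, p i < ∞) :
    (∃ ε > (0 : ℝ), ∃ c : ℝ≥0∞, 0 < c ∧ c < ∞ ∧
      ∀ f : (∀ i, α i) → ℝ, Measurable f → mixedNorm μ p f < ∞ →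
        hardy (Measure.pi μ) (1 / (⨅ i, p i).toReal) (⨅ i, p i) ε f ≤ c * mixedNorm μ p f) ∧
    (∀ v : ℝ≥0∞, 0 < v → v < ⨅ i, p i →
      ¬ ∃ ε > (0 : ℝ), ∃ c : ℝ≥0∞, c < ∞ ∧
        ∀ f : (∀ i, α i) → ℝ, Measurable f → mixedNorm μ p f < ∞ →
          hardy (Measure.pi μ) (1 / (⨅ i, p i).toReal) v ε f ≤ c * mixedNorm μ p f) := by
  have hp (i : Fin d) : p i ≠ 0 := (hminpos.trans_le (iInf_le p i)).ne'
  have hmin (i : Fin d) : p i₀ ≤ p i := hi₀.trans_le (iInf_le p i)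
  simp only [← hi₀] at hminfin ⊢
  constructor
  · let c := ∏ i, μ i univ ^ (1 / (p i₀).toReal - 1 / (p i).toReal)
    have hc : c ≠ ∞ := prod_ne_top fun i _ => ENNReal.rpow_ne_top_of_nonneg
      (one_div_toReal_sub_nonneg (hp i₀) (hmin i)) (measure_ne_top _ _)
    have hc₀ : 0 < c := pos_iff_ne_zero.2 <| Finset.prod_ne_zero_iff.2 fun i _ =>
      (ENNReal.rpow_pos (by simpa using hμ i) (measure_ne_top _ _)).ne'
    exact ⟨1, one_pos, c, hc₀, hc.lt_top, fun f hf _ =>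
      hardy_le_mul_mixedNorm μ (hp i₀) hminfin.ne hmin 1 hf⟩
  · rintro v hv₀ hv ⟨ε, hε, c, hc, hbound⟩
    obtain ⟨f, hf, hnorm, hhardy⟩ :=
      exists_mixedNorm_ne_top_hardy_eq_top hμ hp hminfin.ne hu hv₀.ne' hv
    exact (ENNReal.mul_ne_top hc.ne hnorm)
      (top_le_iff.1 ((hhardy ε hε).symm.trans_le (hbound f hf hnorm.lt_top)))

/-- The additional growth-envelope index of `L_{p⃗}(Ω)` equals
`min{p₁,…,p_d}`: the Hardy-type inequality holds for `v = min{p₁,…,p_d}` and fails for every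
`0 < v < min{p₁,…,p_d}`. -/
theorem statement4 (d : ℕ) (hd : 0 < d) (Ω : Fin d → Set ℝ)
    (hΩmeas : ∀ i, MeasurableSet (Ω i)) (hΩfin : ∀ i, volume (Ω i) < ∞)
    (hΩsub : ∀ i, Set.Ioc (0 : ℝ) 1 ⊆ Ω i)
    (p : Fin d → ℝ≥0∞) (hp : ∀ i, 0 < p i)
    (hminpos : 0 < ⨅ i, p i) (hminfin : ⨅ i, p i < ∞) :
    (∃ ε > (0 : ℝ), ∃ c : ℝ≥0∞, 0 < c ∧ c < ∞ ∧
      ∀ f : (Fin d → ℝ) → ℝ, Measurable f →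
        mixedNorm (fun i => volume.restrict (Ω i)) p f < ∞ →
        hardy (Measure.pi fun i => volume.restrict (Ω i)) (1 / (⨅ i, p i).toReal)
            (⨅ i, p i) ε f ≤
          c * mixedNorm (fun i => volume.restrict (Ω i)) p f) ∧
    (∀ v : ℝ≥0∞, 0 < v → v < ⨅ i, p i →
      ¬ ∃ ε > (0 : ℝ), ∃ c : ℝ≥0∞, c < ∞ ∧
        ∀ f : (Fin d → ℝ) → ℝ, Measurable f →
          mixedNorm (fun i => volume.restrict (Ω i)) p f < ∞ →
          hardy (Measure.pi fun i => volume.restrict (Ω i)) (1 / (⨅ i, p i).toReal) v ε f ≤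
            c * mixedNorm (fun i => volume.restrict (Ω i)) p f) := by
  have : Nonempty (Fin d) := ⟨⟨0, hd⟩⟩
  have (i : Fin d) : IsFiniteMeasure (volume.restrict (Ω i)) := ⟨by simpa using hΩfin i⟩
  obtain ⟨i₀, hi₀⟩ := exists_eq_ciInf_of_finite (f := p)
  exact statement4_general (fun i => (isUniformBelow_restrict (hΩsub i)).ne_zero) hi₀
    (isUniformBelow_restrict (hΩsub i₀)) hminpos hminfin
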